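/- Let n ≥ 1 and let α > 1 be real. For every λ ∈ ℂ the series Σ_{k=0}^∞ [Γ((n+2k)/α)/Γ(n/2+k)] · λ^k / k! is absolutely convergent (the summand sequence is summable); i.e. the Wright-type series ₁Ψ₁[(n/α, 2/α); (n/2, 1); λ] defines an entire function of λ. -/

import Mathlib

/-!
Log-convexity of `Γ` bounds the slope of `log Γ` on `[x, x + s]` by its slopes over adjacent unit
intervals, which are logarithms by the functional equation; squeezing gives
`Γ (x + s) ∼ x ^ s Γ x` as `x → ∞`. Hence the ratio of consecutive coefficients
`Γ (a + A k) / (Γ (b + B k) k!)` is asymptotically a constant times `k ^ (A - B - 1)`, so it tends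
to `0` as soon as `A < B + 1`. The series at hand has `A = 2 / α < 2` and `B = 1`.
-/

open Filter Topology FormalMultilinearSeries

section GammaGrowth

variable {x s : ℝ}

lemma log_Gamma_add_one_sub_log_Gamma (hx : 0 < x) :
    Real.log (Real.Gamma (x + 1)) - Real.log (Real.Gamma x) = Real.log x := by
  rw [Real.Gamma_add_one hx.ne', Real.log_mul hx.ne' (Real.Gamma_pos_of_pos hx).ne',
    add_sub_cancel_right]

lemma Gamma_add_le_rpow_mul_Gamma (hx : 0 < x) (hs : 0 ≤ s) :
    Real.Gamma (x + s) ≤ (x + s) ^ s * Real.Gamma x := by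
  obtain rfl | hs := hs.eq_or_lt
  · simp
  have hxs : 0 < x + s := by positivity
  have slope_le := Real.convexOn_log_Gamma.slope_mono_adjacent (x := x) (y := x + s)
    (z := x + s + 1) hx (Set.mem_Ioi.2 (by positivity)) (by linarith) (by linarith)
  simp only [Function.comp_apply, add_sub_cancel_left, div_one,
    log_Gamma_add_one_sub_log_Gamma hxs, div_le_iff₀ hs] at slope_le
  have hΓ := Real.Gamma_pos_of_pos hx
  rw [← Real.log_le_log_iff (Real.Gamma_pos_of_pos hxs) (by positivity),
    Real.log_mul (by positivity) hΓ.ne', Real.log_rpow hxs]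
  linarith

lemma rpow_mul_Gamma_le_Gamma_add (hx : 1 < x) (hs : 0 ≤ s) :
    (x - 1) ^ s * Real.Gamma x ≤ Real.Gamma (x + s) := by
  obtain rfl | hs := hs.eq_or_lt
  · simp
  have hx₁ : 0 < x - 1 := sub_pos.2 hx
  have hx₀ : 0 < x := by linarith
  have slope_le := Real.convexOn_log_Gamma.slope_mono_adjacent (x := x - 1) (y := x)
    (z := x + s) hx₁ (Set.mem_Ioi.2 (by positivity)) (by linarith) (by linarith)
  have log_ratio := log_Gamma_add_one_sub_log_Gamma hx₁
  rw [sub_add_cancel] at log_ratio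
  simp only [Function.comp_apply, add_sub_cancel_left, sub_sub_cancel, div_one, log_ratio,
    le_div_iff₀ hs] at slope_le
  have hΓ := Real.Gamma_pos_of_pos hx₀
  rw [← Real.log_le_log_iff (by positivity) (Real.Gamma_pos_of_pos (by positivity)),
    Real.log_mul (by positivity) hΓ.ne', Real.log_rpow hx₁]
  linarith

lemma tendsto_add_const_div_self_rpow_atTop (c s : ℝ) :
    Tendsto (fun x : ℝ ↦ ((x + c) / x) ^ s) atTop (𝓝 1) := by
  have base : Tendsto (fun x : ℝ ↦ 1 + c / x) atTop (𝓝 1) := by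
    simpa using (tendsto_const_nhds (x := (1 : ℝ))).add (tendsto_id.const_div_atTop c)
  have := base.rpow_const (p := s) (.inl one_ne_zero)
  rw [Real.one_rpow] at this
  refine this.congr' ?_
  filter_upwards [eventually_ne_atTop 0] with x hx
  rw [add_div, div_self hx]

lemma tendsto_Gamma_add_div_Gamma_div_rpow_atTop (hs : 0 ≤ s) :
    Tendsto (fun x ↦ Real.Gamma (x + s) / Real.Gamma x / x ^ s) atTop (𝓝 1) := by
  refine tendsto_of_tendsto_of_tendsto_of_le_of_le'
    (tendsto_add_const_div_self_rpow_atTop (-1) s) (tendsto_add_const_div_self_rpow_atTop s s) ?_ ?_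
  all_goals
    filter_upwards [eventually_gt_atTop 1] with x hx
    have hx₀ : 0 < x := by linarith
    have hΓ := Real.Gamma_pos_of_pos hx₀
    rw [Real.div_rpow (by linarith) hx₀.le]
    gcongr
  · exact (le_div_iff₀ hΓ).2 (rpow_mul_Gamma_le_Gamma_add hx hs)
  · exact (div_le_iff₀ hΓ).2 (Gamma_add_le_rpow_mul_Gamma hx₀ hs)

/-- For `A = 0` the sequence is constantly `1`, and so is the limit, since `0 ^ 0 = 1`. -/
lemma tendsto_Gamma_affine_succ_div_div_rpow {a A : ℝ} (ha : 0 < a) (hA : 0 ≤ A) :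
    Tendsto (fun k : ℕ ↦ Real.Gamma (a + A * (k + 1)) / Real.Gamma (a + A * k) / (k : ℝ) ^ A)
      atTop (𝓝 (A ^ A)) := by
  obtain rfl | hA := hA.eq_or_lt
  · simp [(Real.Gamma_pos_of_pos ha).ne']
  have affine_atTop : Tendsto (fun k : ℕ ↦ a + A * k) atTop atTop :=
    tendsto_atTop_add_const_left _ _ (tendsto_natCast_atTop_atTop.const_mul_atTop hA)
  have affine_div : Tendsto (fun k : ℕ ↦ ((a + A * k) / k) ^ A) atTop (𝓝 (A ^ A)) := by
    refine Tendsto.rpow_const ?_ (.inl hA.ne')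
    have := (tendsto_const_div_atTop_nhds_zero_nat a).add_const A
    rw [zero_add] at this
    refine this.congr' ?_
    filter_upwards [eventually_ne_atTop 0] with k hk
    field_simp
  have := ((tendsto_Gamma_add_div_Gamma_div_rpow_atTop hA.le).comp affine_atTop).mul affine_div
  rw [one_mul] at this
  refine this.congr fun k ↦ ?_
  have hak : 0 < a + A * k := by positivity
  rw [Function.comp_apply, Real.div_rpow hak.le k.cast_nonneg, mul_add_one, ← add_assoc]
  field_simp

end GammaGrowth

lemma tendsto_rpow_div_rpow_div_succ {p q : ℝ} (hpq : p < q + 1) :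
    Tendsto (fun k : ℕ ↦ (k : ℝ) ^ p / (k : ℝ) ^ q / (k + 1)) atTop (𝓝 0) := by
  have rpow_neg := (tendsto_rpow_neg_atTop (y := q + 1 - p) (by linarith)).comp
    (tendsto_natCast_atTop_atTop (R := ℝ))
  refine squeeze_zero' (.of_forall fun k ↦ by positivity) ?_ rpow_neg
  filter_upwards [eventually_gt_atTop 0] with k hk
  have hk₀ : (0 : ℝ) < k := Nat.cast_pos.2 hk
  calc (k : ℝ) ^ p / (k : ℝ) ^ q / (k + 1) ≤ (k : ℝ) ^ p / (k : ℝ) ^ q / k := by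
        gcongr; linarith
    _ = (k : ℝ) ^ (-(q + 1 - p)) := by
        rw [neg_sub, Real.rpow_sub hk₀, Real.rpow_add_one hk₀.ne', div_div]

/-- The `k`-th Taylor coefficient at `0` of the Wright function `₁Ψ₁[(a, A); (b, B); ·]`,
including the factor `1 / k!`. -/
noncomputable def wrightCoeff (a A b B : ℝ) (k : ℕ) : ℝ :=
  Real.Gamma (a + A * k) / Real.Gamma (b + B * k) / k.factorial

section Wright

variable {a A b B : ℝ}

lemma wrightCoeff_pos (ha : 0 < a) (hA : 0 ≤ A) (hb : 0 < b) (hB : 0 ≤ B) (k : ℕ) :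
    0 < wrightCoeff a A b B k :=
  div_pos (div_pos (Real.Gamma_pos_of_pos (by positivity)) (Real.Gamma_pos_of_pos (by positivity)))
    (by positivity)

lemma tendsto_wrightCoeff_succ_div (ha : 0 < a) (hA : 0 ≤ A) (hb : 0 < b) (hB : 0 ≤ B)
    (hAB : A < B + 1) :
    Tendsto (fun k ↦ wrightCoeff a A b B (k + 1) / wrightCoeff a A b B k) atTop (𝓝 0) := by
  have hBB : B ^ B ≠ 0 := by
    obtain rfl | hB := hB.eq_or_lt
    · simp
    · positivity
  have := ((tendsto_Gamma_affine_succ_div_div_rpow ha hA).div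
    (tendsto_Gamma_affine_succ_div_div_rpow hb hB) hBB).mul (tendsto_rpow_div_rpow_div_succ hAB)
  rw [mul_zero] at this
  refine this.congr' ?_
  filter_upwards [eventually_gt_atTop 0] with k hk
  have hk₀ : (0 : ℝ) < k := Nat.cast_pos.2 hk
  have hkA := (Real.rpow_pos_of_pos hk₀ A).ne'
  have hkB := (Real.rpow_pos_of_pos hk₀ B).ne'
  simp only [Pi.div_apply, wrightCoeff, Nat.factorial_succ, Nat.cast_mul, Nat.cast_succ]
  field_simp

theorem radius_ofScalars_wrightCoeff_eq_top (ha : 0 < a) (hA : 0 ≤ A) (hb : 0 < b) (hB : 0 ≤ B)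
    (hAB : A < B + 1) : (ofScalars ℂ (wrightCoeff a A b B)).radius = ⊤ := by
  have coeff_pos := wrightCoeff_pos ha hA hb hB
  refine ofScalars_radius_eq_top_of_tendsto ℂ _ (.of_forall fun k ↦ (coeff_pos k).ne') ?_
  simpa only [Real.norm_of_nonneg (coeff_pos _).le] using
    tendsto_wrightCoeff_succ_div ha hA hb hB hAB

theorem wright_series_summable_general (ha : 0 < a) (hA : 0 ≤ A) (hb : 0 < b) (hB : 0 ≤ B)
    (hAB : A < B + 1) (lam : ℂ) :
    Summable (fun k : ℕ =>
      ((Real.Gamma (a + A * k) / Real.Gamma (b + B * k) : ℝ) : ℂ) *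
        lam ^ k / (k.factorial : ℂ)) := by
  have := (ofScalars ℂ (wrightCoeff a A b B)).summable (x := lam)
    (by simp [radius_ofScalars_wrightCoeff_eq_top ha hA hb hB hAB])
  refine this.congr fun k ↦ ?_
  rw [ofScalars_apply_eq, wrightCoeff, Complex.real_smul, Complex.ofReal_div _ (k.factorial : ℝ),
    Complex.ofReal_natCast, div_mul_eq_mul_div]

end Wright

/-- for `n ≥ 1` and `α > 1`, the Wright-type series
`₁Ψ₁[(n/α, 2/α); (n/2, 1); λ] = Σ_k Γ((n+2k)/α)/Γ(n/2+k) · λ^k/k!`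
is absolutely convergent for every `λ ∈ ℂ`, i.e. the summand sequence is summable. -/
theorem wright_series_summable (n : ℕ) (hn : 1 ≤ n) (α : ℝ) (hα : 1 < α) (lam : ℂ) :
    Summable (fun k : ℕ =>
      ((Real.Gamma ((n + 2 * k) / α) / Real.Gamma (n / 2 + k) : ℝ) : ℂ) *
        lam ^ k / (k.factorial : ℂ)) := by
  have hn₀ : (0 : ℝ) < n := Nat.cast_pos.2 hn
  have hα₀ : 0 < α := by linarith
  have hα₂ : 2 / α < 1 + 1 := by rw [div_lt_iff₀ hα₀]; linarith
  simpa only [add_div, mul_div_right_comm, one_mul] using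
    wright_series_summable_general (div_pos hn₀ hα₀) (by positivity) (half_pos hn₀) zero_le_one
      hα₂ lam
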